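/- Let R ⊂ A be a split Frobenius extension of rings. Then every projective left R-module has finite injective dimension over R if and only if every projective left A-module has finite injective dimension over A. -/

import Mathlib

universe u

section Frobenius

variable {R A : Type u} [Ring R] [Ring A]

/-- A ring extension `ι : R →+* A` (an injective ring homomorphism) is a Frobenius extension
if there is an `R`-`R`-bimodule homomorphism `τ : A → R` together with dual bases
`x i`, `y i` in `A`. -/
def IsFrobeniusExtension (ι : R →+* A) : Prop :=
  Function.Injective ι ∧
  ∃ (τ : A →+ R) (n : ℕ) (x y : Fin n → A),
    (∀ (r : R) (a : A), τ (ι r * a) = r * τ a) ∧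
    (∀ (a : A) (r : R), τ (a * ι r) = τ a * r) ∧
    (∀ a : A, ∑ i, x i * ι (τ (y i * a)) = a) ∧
    (∀ a : A, ∑ i, ι (τ (a * x i)) * y i = a)

/-- A ring extension `ι : R →+* A` is split if `R` is a direct summand of `A` as an
`R`-`R`-bimodule, i.e. there is an `R`-`R`-bimodule homomorphism `π : A → R` with
`π ∘ ι = id`. -/
def IsSplitExtension (ι : R →+* A) : Prop :=
  ∃ π : A →+ R,
    (∀ (r : R) (a : A), π (ι r * a) = r * π a) ∧
    (∀ (a : A) (r : R), π (a * ι r) = π a * r) ∧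
    (∀ r : R, π (ι r) = r)

end Frobenius

/-- `idimLE R n M` means that `M` admits an injective coresolution of length `n`. -/
def idimLE (R : Type u) [Ring R] : ℕ → ModuleCat.{u} R → Prop
  | 0, M => Module.Injective R M
  | n + 1, M => ∃ (G : ModuleCat.{u} R) (f : M →ₗ[R] G),
      Function.Injective f ∧ Module.Injective R G ∧
      idimLE R n (ModuleCat.of R (↥G ⧸ LinearMap.range f))

/-- The injective dimension of a left `R`-module, in `ℕ∞`. -/
noncomputable def idim (R : Type u) [Ring R] (M : ModuleCat.{u} R) : ℕ∞ :=
  sInf {k : ℕ∞ | ∃ n : ℕ, k = (n : ℕ∞) ∧ idimLE R n M}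

/-!
For a Frobenius extension, `Hom_R(A, -)` is not only right but also left adjoint to restriction of
scalars, the unit being `p ↦ τ(-) • p` and the counit `g ↦ ∑ xᵢ • g yᵢ`. So both functors are exact
and preserve projectives and injectives; in particular neither raises the injective dimension.
Write `F` for one of them and `G` for the other. If `G` is faithful, the counit `F (G P) → P` is
an epimorphism, so a projective `P` is a retract of `F (G P)`, whose injective dimension is at most
that of the projective `G P`. Restriction is always faithful, and `Hom_R(A, -)` is faithful because
a splitting makes evaluation at `1` surjective onto each module.
-/

section FiniteInjectiveDimension

open CategoryTheory Limits

variable {C : Type*} {D : Type*} [Category* C] [Category* D] [Abelian C] [Abelian D]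

theorem hasInjectiveDimensionLE_obj_of_exact [EnoughInjectives C] (F : C ⥤ D)
    [PreservesFiniteLimits F] [PreservesFiniteColimits F] [F.PreservesInjectiveObjects]
    {n : ℕ} {X : C} (hX : HasInjectiveDimensionLE X n) : HasInjectiveDimensionLE (F.obj X) n := by
  have : F.PreservesZeroMorphisms := F.preservesZeroMorphisms_of_preserves_terminal_object
  induction n generalizing X with
  | zero =>
    have : Injective X := injective_iff_hasInjectiveDimensionLT_one.2 hX
    exact injective_iff_hasInjectiveDimensionLT_one.1 (F.injective_obj X)
  | succ n ih =>
    obtain ⟨I, _, f, _⟩ := EnoughInjectives.presentation X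
    let S := ShortComplex.mk f (cokernel.π f) (cokernel.condition f)
    have hS : S.ShortExact := { exact := ShortComplex.exact_cokernel f }
    have hcoker : HasInjectiveDimensionLE (cokernel f) n :=
      (hS.hasInjectiveDimensionLT_X₃_iff n ‹Injective I›).2 hX
    exact ((hS.map_of_exact F).hasInjectiveDimensionLT_X₃_iff n (F.injective_obj I)).1 (ih hcoker)

theorem hasInjectiveDimensionLE_of_epi {X P : C} (f : X ⟶ P) [Epi f] [Projective P] {n : ℕ}
    (hX : HasInjectiveDimensionLE X n) : HasInjectiveDimensionLE P n :=
  Retract.hasInjectiveDimensionLT { i := Projective.factorThru (𝟙 P) f, r := f } (n + 1)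

variable (C) in
/-- The property of an abelian category that every projective object has finite injective
dimension. -/
def ProjectivesHaveFiniteInjectiveDimension : Prop :=
  ∀ P : C, Projective P → ∃ n : ℕ, HasInjectiveDimensionLE P n

theorem ProjectivesHaveFiniteInjectiveDimension.of_adjunctions [EnoughInjectives C]
    (hC : ProjectivesHaveFiniteInjectiveDimension C) {F : C ⥤ D} {G : D ⥤ C}
    (adj : F ⊣ G) (adj' : G ⊣ F) [G.Faithful] :
    ProjectivesHaveFiniteInjectiveDimension D := by
  intro P hP
  have := adj.leftAdjoint_preservesColimits
  have := adj.rightAdjoint_preservesLimits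
  have := adj'.rightAdjoint_preservesLimits
  have : F.PreservesInjectiveObjects :=
    Functor.preservesInjectiveObjects_of_adjunction_of_preservesMonomorphisms adj'
  obtain ⟨n, hn⟩ := hC (G.obj P) (adj'.map_projective P hP)
  exact ⟨n, hasInjectiveDimensionLE_of_epi (adj.counit.app P)
    (hasInjectiveDimensionLE_obj_of_exact F hn)⟩

end FiniteInjectiveDimension

section InjectiveDimension

open CategoryTheory

variable {R : Type u} [Ring R]

theorem hasInjectiveDimensionLE_quotient_range_iff {M G : ModuleCat.{u} R} (f : M →ₗ[R] G)
    (hf : Function.Injective f) (hG : Module.Injective R G) (n : ℕ) :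
    HasInjectiveDimensionLE (ModuleCat.of R (G ⧸ LinearMap.range f)) n ↔
      HasInjectiveDimensionLE M (n + 1) :=
  (ModuleCat.shortComplex_shortExact
    (ModuleCat.shortComplexOfCompEqZero _ _ f.exact_map_mkQ_range.linearMap_comp_eq_zero)
    f.exact_map_mkQ_range hf
    (Submodule.mkQ_surjective _)).hasInjectiveDimensionLT_X₃_iff n
      ((Module.injective_iff_injective_object R G).1 hG)

theorem idimLE_iff_hasInjectiveDimensionLE {n : ℕ} {M : ModuleCat.{u} R} :
    idimLE R n M ↔ HasInjectiveDimensionLE M n := by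
  induction n generalizing M with
  | zero =>
    exact (Module.injective_iff_injective_object R M).trans
      injective_iff_hasInjectiveDimensionLT_one
  | succ n ih =>
    constructor
    · rintro ⟨G, f, hf, hG, hn⟩
      exact (hasInjectiveDimensionLE_quotient_range_iff f hf hG n).1 (ih.1 hn)
    · intro hM
      obtain ⟨I, _, f, _⟩ := EnoughInjectives.presentation M
      have hf : Function.Injective f.hom := (ModuleCat.mono_iff_injective f).1 ‹_›
      have hI : Module.Injective R I := (Module.injective_iff_injective_object R I).2 ‹_›
      exact ⟨I, f.hom, hf, hI,
        ih.2 ((hasInjectiveDimensionLE_quotient_range_iff f.hom hf hI n).2 hM)⟩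

theorem idim_ne_top_iff {M : ModuleCat.{u} R} :
    idim R M ≠ ⊤ ↔ ∃ n : ℕ, HasInjectiveDimensionLE M n := by
  simp [idim, sInf_eq_top, idimLE_iff_hasInjectiveDimensionLE]

theorem forall_projective_idim_ne_top_iff :
    (∀ M : ModuleCat.{u} R, Module.Projective R M → idim R M ≠ ⊤) ↔
      ProjectivesHaveFiniteInjectiveDimension (ModuleCat.{u} R) :=
  forall_congr' fun M => imp_congr (IsProjective.iff_projective M) idim_ne_top_iff

end InjectiveDimension

section Coextension

open CategoryTheory ModuleCat

variable {R A : Type u} [Ring R] [Ring A] {ι : R →+* A}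

section Elements

variable {X : ModuleCat.{u} R}

/-- The element `a ↦ f a • p` of the coextension of `X` along `ι`, for `p : X` and a left `R`-linear
map `f : A → R`. -/
noncomputable def coextendScalarsSMulRight (f : A →+ R) (hf : ∀ r a, f (ι r * a) = r * f a)
    (p : X) : (coextendScalars ι).obj X :=
  (CoextendScalars.equiv ι X).symm
    { toFun := fun a : A => f a • p
      map_add' := (((smulAddHom R X).flip p).comp f).map_add
      map_smul' := fun r (a : A) => (congrArg (· • p) (hf r a)).trans (mul_smul r (f a) p) }

theorem coextendScalars_ext {g h : (coextendScalars ι).obj X}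
    (hgh : ∀ a : A, g a = h a) : g = h :=
  CoextendScalars.ext (LinearMap.ext hgh)

theorem coextendScalars_apply_mul (g : (coextendScalars ι).obj X) (r : R) (a : A) :
    g (ι r * a : A) = r • g a :=
  (CoextendScalars.equiv ι X g).map_smul r a

theorem coextendScalars_apply_sum {κ : Type*} (g : (coextendScalars ι).obj X)
    (s : Finset κ) (f : κ → A) : g (∑ i ∈ s, f i : A) = ∑ i ∈ s, g (f i) :=
  map_sum (CoextendScalars.equiv ι X g) f s

theorem coextendScalars_sum_apply {κ : Type*} (s : Finset κ)
    (g : κ → (coextendScalars ι).obj X) (a : A) : (∑ i ∈ s, g i) a = ∑ i ∈ s, g i a :=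
  (congrArg (fun l : (restrictScalars ι).obj (of A A) →ₗ[R] X => l a)
    (map_sum (CoextendScalars.equiv ι X) g s)).trans (LinearMap.sum_apply s _ _)

end Elements

/-- A Frobenius system of `ι : R →+* A`: an `R`-`R`-bimodule homomorphism `τ : A → R` with dual
bases `x` and `y`. -/
structure FrobeniusSystem (ι : R →+* A) (κ : Type*) [Fintype κ] where
  τ : A →+ R
  x : κ → A
  y : κ → A
  map_mul_left (r : R) (a : A) : τ (ι r * a) = r * τ a
  map_mul_right (a : A) (r : R) : τ (a * ι r) = τ a * r
  sum_x_mul (a : A) : ∑ i, x i * ι (τ (y i * a)) = a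
  sum_mul_y (a : A) : ∑ i, ι (τ (a * x i)) * y i = a

theorem IsFrobeniusExtension.exists_frobeniusSystem (hF : IsFrobeniusExtension ι) :
    ∃ n : ℕ, Nonempty (FrobeniusSystem ι (Fin n)) :=
  let ⟨_, τ, n, x, y, hleft, hright, hx, hy⟩ := hF
  ⟨n, ⟨τ, x, y, hleft, hright, hx, hy⟩⟩

namespace FrobeniusSystem

variable {κ : Type*} [Fintype κ] (φ : FrobeniusSystem ι κ)

theorem coextendScalars_apply_eq_sum {X : ModuleCat.{u} R}
    (g : (coextendScalars ι).obj X) (a : A) :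
    g a = ∑ i, φ.τ (a * φ.x i) • g (φ.y i) := by
  conv_lhs => rw [← φ.sum_mul_y a, coextendScalars_apply_sum]
  simp only [coextendScalars_apply_mul]

/-- The `R`-linear map from `X` to its coextension sending `p` to `a ↦ τ a • p`. -/
noncomputable def unitApp (X : ModuleCat.{u} R) :
    X ⟶ (restrictScalars ι).obj ((coextendScalars ι).obj X) :=
  ofHom (Y := (restrictScalars ι).obj ((coextendScalars ι).obj X))
    { toFun := coextendScalarsSMulRight φ.τ φ.map_mul_left
      map_add' p q := coextendScalars_ext fun a => smul_add (φ.τ a) p q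
      map_smul' r p := coextendScalars_ext fun a =>
        show φ.τ a • r • p = φ.τ (a * ι r) • p by rw [φ.map_mul_right, mul_smul] }

/-- The `A`-linear map to `Y` from the coextension of its restriction sending `g` to
`∑ i, x i • g (y i)`. -/
noncomputable def counitApp (Y : ModuleCat.{u} A) :
    (coextendScalars ι).obj ((restrictScalars ι).obj Y) ⟶ Y :=
  ofHom (X := (coextendScalars ι).obj ((restrictScalars ι).obj Y))
    { toFun g := ∑ i, φ.x i • (g (φ.y i) : Y)
      map_add' g h :=
        (Finset.sum_congr rfl fun i _ => smul_add (φ.x i) (g (φ.y i) : Y) (h (φ.y i))).trans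
          Finset.sum_add_distrib
      map_smul' a g :=
        calc ∑ i, φ.x i • (g (φ.y i * a : A) : Y)
          _ = ∑ i, φ.x i • ∑ j, ι (φ.τ (φ.y i * a * φ.x j)) • (g (φ.y j) : Y) :=
            Finset.sum_congr rfl fun i _ =>
              congrArg (φ.x i • ·) (φ.coextendScalars_apply_eq_sum g (φ.y i * a))
          _ = ∑ j, (∑ i, φ.x i * ι (φ.τ (φ.y i * (a * φ.x j)))) • (g (φ.y j) : Y) := by
            simp only [Finset.smul_sum, Finset.sum_smul, mul_smul, mul_assoc]
            exact Finset.sum_comm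
          _ = a • ∑ j, φ.x j • (g (φ.y j) : Y) := by
            simp only [φ.sum_x_mul, Finset.smul_sum, mul_smul] }

theorem counitApp_apply {Y : ModuleCat.{u} A}
    (g : (coextendScalars ι).obj ((restrictScalars ι).obj Y)) :
    φ.counitApp Y g = ∑ i, φ.x i • (g (φ.y i) : Y) :=
  rfl

theorem counitApp_naturality {Y Z : ModuleCat.{u} A} (f : Y ⟶ Z)
    (g : (coextendScalars ι).obj ((restrictScalars ι).obj Y)) :
    φ.counitApp Z ((coextendScalars ι).map ((restrictScalars ι).map f) g) =
      f (φ.counitApp Y g) := by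
  have hf (v : κ → Y) : ∑ i, φ.x i • f (v i) = f (∑ i, φ.x i • v i) := by
    simp only [map_sum, map_smul]
  exact hf fun i => g (φ.y i)

theorem counitApp_coextendScalars_map_unitApp {X : ModuleCat.{u} R}
    (g : (coextendScalars ι).obj X) :
    φ.counitApp _ ((coextendScalars ι).map (φ.unitApp X) g) = g :=
  coextendScalars_ext fun a => by
    rw [counitApp_apply]
    exact (coextendScalars_sum_apply _ _ a).trans (φ.coextendScalars_apply_eq_sum g a).symm

theorem counitApp_unitApp {Y : ModuleCat.{u} A} (p : Y) :
    φ.counitApp Y (φ.unitApp ((restrictScalars ι).obj Y) p) = p :=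
  calc ∑ i, φ.x i • ι (φ.τ (φ.y i)) • p
    _ = (∑ i, φ.x i * ι (φ.τ (φ.y i * 1))) • p := by
      simp only [Finset.sum_smul, mul_smul, mul_one]
    _ = p := by rw [φ.sum_x_mul, one_smul]

/-- The adjunction, determined by a Frobenius system, that makes coextension of scalars a left
adjoint of restriction of scalars. -/
noncomputable def coextendRestrictScalarsAdj :
    coextendScalars.{u, u, u} ι ⊣ restrictScalars.{u} ι :=
  Adjunction.mkOfUnitCounit
    { unit :=
        { app := φ.unitApp
          naturality _ _ f := ModuleCat.hom_ext <| LinearMap.ext fun p =>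
            coextendScalars_ext fun a => (f.hom.map_smul (φ.τ a) p).symm }
      counit :=
        { app := φ.counitApp
          naturality _ _ f := ModuleCat.hom_ext <| LinearMap.ext fun g =>
            φ.counitApp_naturality f g }
      left_triangle := by
        ext X g
        exact φ.counitApp_coextendScalars_map_unitApp g
      right_triangle := by
        ext Y p
        exact φ.counitApp_unitApp p }

end FrobeniusSystem

/-- The extension `ι : R →+* A` is left split if `R` is a direct summand of `A` as a left
`R`-module, i.e. there is a left `R`-linear map `π : A → R` with `π ∘ ι = id`. -/
def IsLeftSplitExtension (ι : R →+* A) : Prop :=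
  ∃ π : A →+ R, (∀ (r : R) (a : A), π (ι r * a) = r * π a) ∧ ∀ r : R, π (ι r) = r

theorem IsSplitExtension.isLeftSplitExtension (hS : IsSplitExtension ι) :
    IsLeftSplitExtension ι :=
  let ⟨π, hleft, _, hπ⟩ := hS
  ⟨π, hleft, hπ⟩

theorem IsLeftSplitExtension.exists_coextendScalars_apply_one_eq (hS : IsLeftSplitExtension ι)
    {X : ModuleCat.{u} R} (p : X) : ∃ g : (coextendScalars ι).obj X, g (1 : A) = p := by
  obtain ⟨π, hleft, hπ⟩ := hS
  refine ⟨coextendScalarsSMulRight π hleft p, ?_⟩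
  change π 1 • p = p
  rw [← map_one ι, hπ, one_smul]

theorem IsLeftSplitExtension.faithful_coextendScalars (hS : IsLeftSplitExtension ι) :
    (coextendScalars.{u, u, u} ι).Faithful where
  map_injective {X Y f f'} h := by
    ext p
    obtain ⟨g, rfl⟩ := hS.exists_coextendScalars_apply_one_eq p
    rw [← CoextendScalars.map_apply, h, CoextendScalars.map_apply]

end Coextension

section Statement

variable {R A : Type u} [Ring R] [Ring A]

theorem stmt17_general (ι : R →+* A) (hF : IsFrobeniusExtension ι) (hS : IsLeftSplitExtension ι) :
    (∀ M : ModuleCat.{u} R, Module.Projective R M → idim R M ≠ ⊤) ↔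
    (∀ M : ModuleCat.{u} A, Module.Projective A M → idim A M ≠ ⊤) := by
  obtain ⟨n, ⟨φ⟩⟩ := hF.exists_frobeniusSystem
  have : (ModuleCat.coextendScalars.{u, u, u} ι).Faithful := hS.faithful_coextendScalars
  have restrictCoextend := ModuleCat.restrictCoextendScalarsAdj.{u} ι
  rw [forall_projective_idim_ne_top_iff, forall_projective_idim_ne_top_iff]
  exact ⟨fun hR => hR.of_adjunctions φ.coextendRestrictScalarsAdj restrictCoextend,
    fun hA => hA.of_adjunctions restrictCoextend φ.coextendRestrictScalarsAdj⟩

theorem stmt17 (ι : R →+* A) (hF : IsFrobeniusExtension ι) (hS : IsSplitExtension ι) :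
    (∀ M : ModuleCat.{u} R, Module.Projective R M → idim R M ≠ ⊤) ↔
    (∀ M : ModuleCat.{u} A, Module.Projective A M → idim A M ≠ ⊤) :=
  stmt17_general ι hF hS.isLeftSplitExtension

end Statement
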